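/- arXiv:2105.08406 — 2 statements merged into one kernel-verified Lean document; each statement's English description precedes it below -/
import Mathlib

section
/- Every set of 9 points in ℝ³ in general position contains a 6-hole; that is, h⁽³⁾(6) ≤ 9. -/
/-- A finite set `S` of points in `ℝ^d` is in *general position* if every
`(d+1)`-element subset of `S` is affinely independent. -/
def InGeneralPosition (d : ℕ) (S : Finset (Fin d → ℝ)) : Prop :=
  ∀ T ⊆ S, T.card = d + 1 → AffineIndependent ℝ ((↑) : T → (Fin d → ℝ))

/-- A finite set of points is in *convex position* if no point of the set lies in
the convex hull of the other points of the set. -/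
def InConvexPosition (d : ℕ) (X : Finset (Fin d → ℝ)) : Prop :=
  ∀ p ∈ X, p ∉ convexHull ℝ (↑(X.erase p) : Set (Fin d → ℝ))

/-- A *k-hole* in `S` is a `k`-element subset `X ⊆ S` in convex position such that
no point of `S \ X` lies in the convex hull of `X`. -/
def IsHole (d k : ℕ) (S X : Finset (Fin d → ℝ)) : Prop :=
  X ⊆ S ∧ X.card = k ∧ InConvexPosition d X ∧
    ∀ p ∈ S, p ∉ X → p ∉ convexHull ℝ (↑X : Set (Fin d → ℝ))

/-!
A vertex of `conv S` lies in the hull of no other points of `S`, so whether a set `X ⊆ S` is a hole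
has to be tested only at the inner points of `S`, those which are not vertices of the hull. There
are two ways to pass the test.

* *Half-space.* If all inner points other than `p`, `q`, `r` lie strictly below the plane `p q r`,
  then `p`, `q`, `r` and any `k > 0` hull vertices above the plane form a `(k + 3)`-hole.
* *Wedge.* If the half-planes bounded by the line `p q` through `x` and `y` enclose a wedge whose
  only inner points are `p`, `q`, `x`, `y`, then these and any `k` hull vertices in the open wedge
  form a `(k + 4)`-hole.

Nine points have at least four hull vertices, hence at most five inner points. Suppose there is no
6-hole, so that such a half-space holds at most two hull vertices and such a wedge at most one.

* *At most three inner points.* The two sides of a plane through three points, including the inner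
  ones, hold at least six hull vertices.
* *Four inner points.* They span a tetrahedron. At most two hull vertices lie beyond each face, and
  all but at most one of the five lie beyond one of two given faces. So the sets of hull vertices
  beyond the three faces at a vertex are disjoint pairs, which makes six hull vertices.
* *Five inner points.* Three of the coefficients of their affine dependence have the same sign.
  Projecting along the line `p q` through the other two points, one sees that point in the interior
  of the triangle formed by the other three. So there are three wedges around this axis, which
  together contain all hull vertices, but at most one each.
-/

open Finset
open scoped Matrix

lemma sum_mul_affineMap_eq_zero {R E : Type*} [Ring R] [AddCommGroup E] [Module R E]
    {S : Finset E} {w : E → R} (hw : ∑ s ∈ S, w s • s = 0)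
    (hw₀ : ∑ s ∈ S, w s = 0) (f : E →ᵃ[R] R) : ∑ s ∈ S, w s * f s = 0 := by
  have hf : ∀ s, f s = f.linear s + f 0 := fun s ↦ congrFun f.decomp s
  calc ∑ s ∈ S, w s * f s = ∑ s ∈ S, (f.linear (w s • s) + w s * f 0) :=
        sum_congr rfl fun s _ ↦ by rw [hf s, mul_add, map_smul, smul_eq_mul]
    _ = f.linear (∑ s ∈ S, w s • s) + (∑ s ∈ S, w s) * f 0 := by
        rw [sum_add_distrib, map_sum, sum_mul]
    _ = 0 := by rw [hw, hw₀, map_zero, zero_mul, add_zero]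

section ConvexHull

variable {𝕜 E : Type*} [Field 𝕜] [LinearOrder 𝕜] [IsStrictOrderedRing 𝕜] [AddCommGroup E]
  [Module 𝕜 E]

lemma notMem_convexHull_of_neg {f : E →ᵃ[𝕜] 𝕜} {Y : Set E} {p : E}
    (hY : ∀ y ∈ Y, 0 ≤ f y) (hp : f p < 0) : p ∉ convexHull 𝕜 Y := fun h ↦
  hp.not_ge <| convexHull_min (t := f ⁻¹' Set.Ici 0) hY ((convex_Ici 0).affine_preimage f) h

lemma mem_convexHull_zeros {f : E →ᵃ[𝕜] 𝕜} {Y : Set E} {p : E}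
    (hY : ∀ y ∈ Y, 0 ≤ f y) (hp : f p = 0) (hpY : p ∈ convexHull 𝕜 Y) :
    p ∈ convexHull 𝕜 {y ∈ Y | f y = 0} := by
  set Z := convexHull 𝕜 {y ∈ Y | f y = 0}
  have hZ : ∀ z ∈ Z, f z = 0 :=
    convexHull_min (t := f ⁻¹' {0}) (fun y hy ↦ hy.2) ((convex_singleton 0).affine_preimage f)
  have hconv : Convex 𝕜 ({y | 0 < f y} ∪ Z) := by
    rw [convex_iff_forall_pos]
    intro u hu v hv a b ha hb hab
    have hf : f (a • u + b • v) = a * f u + b * f v := by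
      simpa using Convex.combo_affine_apply (f := f) (x := u) (y := v) hab
    rcases hu with hu | hu <;> rcases hv with hv | hv
    · left; simp only [Set.mem_ofPred_eq, hf] at *; positivity
    · left; simp only [Set.mem_ofPred_eq, hf, hZ v hv] at *; simpa using mul_pos ha hu
    · left; simp only [Set.mem_ofPred_eq, hf, hZ u hu] at *; simpa using mul_pos hb hv
    · exact Or.inr (convex_convexHull 𝕜 _ hu hv ha.le hb.le hab)
  have hsub : Y ⊆ {y | 0 < f y} ∪ Z := fun y hy ↦
    (hY y hy).lt_or_eq.imp_right fun h ↦ subset_convexHull 𝕜 _ ⟨hy, h.symm⟩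
  exact (convexHull_min hsub hconv hpY).resolve_left hp.not_gt

end ConvexHull

section HullVertices

variable {E : Type*} [AddCommGroup E] [Module ℝ E]

open Classical in
/-- The vertices of the polytope `conv S`. -/
noncomputable def hullVertices (S : Finset E) : Finset E :=
  {a ∈ S | a ∈ (convexHull ℝ (S : Set E)).extremePoints ℝ}

lemma coe_hullVertices (S : Finset E) :
    (hullVertices S : Set E) = (convexHull ℝ (S : Set E)).extremePoints ℝ := by
  ext a
  simpa [hullVertices] using fun ha ↦ mem_coe.1 (extremePoints_convexHull_subset ha)

lemma hullVertices_subset (S : Finset E) : hullVertices S ⊆ S := by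
  rw [← coe_subset, coe_hullVertices]
  exact extremePoints_convexHull_subset

lemma notMem_convexHull_of_mem_hullVertices {S : Finset E} {Y : Set E} {a : E}
    (ha : a ∈ hullVertices S) (hY : Y ⊆ S) (haY : a ∉ Y) : a ∉ convexHull ℝ Y := by
  rw [← mem_coe, coe_hullVertices,
    (convex_convexHull ℝ _).mem_extremePoints_iff_mem_sdiff_convexHull_sdiff] at ha
  have hYa : Y ⊆ convexHull ℝ (S : Set E) \ {a} := fun y hy ↦
    ⟨subset_convexHull ℝ _ (hY hy), fun hya ↦ haY (hya ▸ hy)⟩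
  exact fun h ↦ ha.2 (convexHull_mono hYa h)

variable [TopologicalSpace E] [IsTopologicalAddGroup E] [ContinuousSMul ℝ E] [T2Space E]
  [LocallyConvexSpace ℝ E]

lemma convexHull_hullVertices (S : Finset E) :
    convexHull ℝ (hullVertices S : Set E) = convexHull ℝ (S : Set E) := by
  rw [← (hullVertices S).finite_toSet.isClosed_convexHull (𝕜 := ℝ) |>.closure_eq, coe_hullVertices]
  exact closure_convexHull_extremePoints (S.finite_toSet.isCompact_convexHull ℝ)
    (convex_convexHull ℝ _)

lemma card_le_card_hullVertices {S T : Finset E} (hTS : T ⊆ S)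
    (hT : AffineIndependent ℝ ((↑) : T → E)) : #T ≤ #(hullVertices S) := by
  refine hT.card_le_card_of_subset_affineSpan ?_
  rw [← affineSpan_convexHull, convexHull_hullVertices, affineSpan_convexHull]
  exact (coe_subset.2 hTS).trans (subset_affineSpan ℝ _)

end HullVertices

section GeneralPosition

variable {d : ℕ} {S : Finset (Fin d → ℝ)}

lemma InGeneralPosition.mono {T : Finset (Fin d → ℝ)} (hS : InGeneralPosition d S) (hT : T ⊆ S) :
    InGeneralPosition d T := fun U hU ↦ hS U (hU.trans hT)

lemma InGeneralPosition.lt_card_hullVertices (hS : InGeneralPosition d S) (hd : d < #S) :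
    d < #(hullVertices S) := by
  obtain ⟨T, hTS, hT⟩ := exists_subset_card_eq hd
  exact hT.symm.trans_le (card_le_card_hullVertices hTS (hS T hTS hT))

lemma InGeneralPosition.exists_affine_dependence (hS : InGeneralPosition d S)
    (hcard : #S = d + 2) :
    ∃ w : (Fin d → ℝ) → ℝ, ∑ s ∈ S, w s • s = 0 ∧ ∑ s ∈ S, w s = 0 ∧ ∀ s ∈ S, w s ≠ 0 := by
  obtain ⟨w, hw, hw₀, s, hs, hws⟩ :=
    Module.exists_nontrivial_relation_sum_zero_of_finrank_succ_lt_card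
      (R := ℝ) (t := S) (by simp [hcard])
  refine ⟨w, hw, hw₀, fun t ht hwt ↦ hws ?_⟩
  have hind := hS (S.erase t) (erase_subset _ _) (by simp [card_erase_of_mem ht, hcard])
  by_cases hst : s = t
  · rwa [hst]
  · refine hind.eq_zero_of_sum_eq_zero_subtype ?_ ?_ s (mem_erase.2 ⟨hst, hs⟩)
    · rwa [sum_erase _ hwt]
    · rwa [sum_erase _ (by simp [hwt])]

lemma isHole_union {m : ℕ} {V T : Finset (Fin d → ℝ)} (hV : V ⊆ hullVertices S) (hT : T ⊆ S)
    (hdisj : Disjoint V T) (hm : #T = m)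
    (hin : ∀ i ∈ T, i ∉ convexHull ℝ ((V ∪ T).erase i : Set (Fin d → ℝ)))
    (hout : ∀ i ∈ S \ hullVertices S, i ∉ T → i ∉ convexHull ℝ (↑(V ∪ T) : Set (Fin d → ℝ))) :
    IsHole d (#V + m) S (V ∪ T) := by
  have hX : V ∪ T ⊆ S := union_subset (hV.trans (hullVertices_subset S)) hT
  refine ⟨hX, by rw [card_union_of_disjoint hdisj, hm], fun p hp ↦ ?_, fun p hp hpX ↦ ?_⟩ <;>
    by_cases hpH : p ∈ hullVertices S
  · exact notMem_convexHull_of_mem_hullVertices hpH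
      (coe_subset.2 ((erase_subset _ _).trans hX)) (by simp)
  · exact hin p ((mem_union.1 hp).resolve_left fun h ↦ hpH (hV h))
  · exact notMem_convexHull_of_mem_hullVertices hpH (coe_subset.2 hX) hpX
  · exact hout p (mem_sdiff.2 ⟨hp, hpH⟩) fun h ↦ hpX (mem_union_right _ h)

end GeneralPosition

section Orientation

/-- The signed volume (times six) of the tetrahedron `p q r s`, as an affine function of `s`; it is
positive on one side of the plane through `p`, `q`, `r` and negative on the other. -/
noncomputable def orient (p q r : Fin 3 → ℝ) : (Fin 3 → ℝ) →ᵃ[ℝ] ℝ :=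
  let n := dotProductBilin ℝ ℝ ((q - p) ⨯₃ (r - p))
  n.toAffineMap - AffineMap.const ℝ _ (n p)

variable (p q r s : Fin 3 → ℝ)

lemma orient_apply : orient p q r s =
    ((q 1 - p 1) * (r 2 - p 2) - (q 2 - p 2) * (r 1 - p 1)) * (s 0 - p 0) +
    ((q 2 - p 2) * (r 0 - p 0) - (q 0 - p 0) * (r 2 - p 2)) * (s 1 - p 1) +
    ((q 0 - p 0) * (r 1 - p 1) - (q 1 - p 1) * (r 0 - p 0)) * (s 2 - p 2) := by
  simp [orient, cross_apply, dotProduct, Fin.sum_univ_three]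
  ring

lemma orient_eq_det : orient p q r s = Matrix.det (.of ![q - p, r - p, s - p]) := by
  simp [orient_apply, Matrix.det_fin_three]
  ring

lemma orient_swap_left : orient q p r s = -orient p q r s := by
  simp only [orient_apply]
  ring

lemma orient_swap_right : orient p q s r = -orient p q r s := by
  simp only [orient_apply]
  ring

lemma orient_rotate : orient q r p s = orient p q r s := by
  simp only [orient_apply]
  ring

lemma orient_rotate_right : orient p r s q = orient p q r s := by
  simp only [orient_apply]
  ring

lemma orient_plucker (x y z a : Fin 3 → ℝ) :
    orient p q y z * orient p q x a + orient p q z x * orient p q y a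
      + orient p q x y * orient p q z a = 0 := by
  simp only [orient_apply]
  ring

@[simp] lemma orient_apply_first : orient p q r p = 0 := by
  simp only [orient_apply]
  ring

@[simp] lemma orient_apply_second : orient p q r q = 0 := by
  rw [← orient_rotate, orient_apply_first]

@[simp] lemma orient_apply_third : orient p q r r = 0 := by
  rw [← orient_rotate, orient_apply_second]

@[simp] lemma orient_left_self : orient p p r s = 0 := by
  simp only [orient_apply]
  ring

@[simp] lemma orient_right_self : orient p q p s = 0 := by
  simp only [orient_apply]
  ring

@[simp] lemma orient_middle_self : orient p q q s = 0 := by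
  rw [orient_rotate, orient_right_self]

variable {p q r s}

lemma orient_ne_zero_of_affineIndependent (h : AffineIndependent ℝ ![p, q, r, s]) :
    orient p q r s ≠ 0 := by
  rw [affineIndependent_iff_linearIndependent_vsub ℝ _ 0,
    ← linearIndependent_equiv (finSuccAboveEquiv 0)] at h
  rw [orient_eq_det, ← isUnit_iff_ne_zero, ← Matrix.isUnit_iff_isUnit_det,
    ← Matrix.linearIndependent_rows_iff_isUnit]
  have hrow : (Matrix.of ![q - p, r - p, s - p]).row =
      (fun i : {i // i ≠ 0} ↦ ![p, q, r, s] i -ᵥ ![p, q, r, s] 0) ∘ finSuccAboveEquiv 0 := by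
    ext i j
    fin_cases i <;> simp [finSuccAboveEquiv_apply]
  rw [hrow]
  exact h

lemma InGeneralPosition.orient_ne_zero {S : Finset (Fin 3 → ℝ)} (hS : InGeneralPosition 3 S)
    (hmem : {p, q, r, s} ⊆ S) (hnodup : [p, q, r, s].Nodup) : orient p q r s ≠ 0 := by
  refine orient_ne_zero_of_affineIndependent ?_
  have hcard : #{p, q, r, s} = 4 := by simpa using List.toFinset_card_of_nodup hnodup
  have hinj : Function.Injective ![p, q, r, s] := by
    rw [← List.nodup_ofFn]
    simpa using hnodup
  exact (hS _ hmem hcard).comp_embedding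
    ⟨fun i ↦ ⟨![p, q, r, s] i, by fin_cases i <;> simp⟩, fun i j h ↦ hinj (congrArg Subtype.val h)⟩

end Orientation

section Holes

variable {S V X : Finset (Fin 3 → ℝ)} {p q r x y a : Fin 3 → ℝ}

lemma nodup_of_orient_ne_zero (h : orient p q r a ≠ 0) : [p, q, r, a].Nodup := by
  simp only [List.nodup_cons, List.mem_cons, List.not_mem_nil]
  refine ⟨?_, ?_, ?_, by simp⟩ <;> contrapose! h
  · rcases h with rfl | rfl | rfl | h <;> simp at *
  · rcases h with rfl | rfl | h <;> simp at *
  · rcases h with rfl | h <;> simp at *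

lemma orient_nonneg_of_pos_of_notMem
    (hX : ∀ v ∈ X, v ∉ ({p, q, r} : Finset _) → 0 < orient p q r v) :
    ∀ v ∈ X, 0 ≤ orient p q r v := by
  intro v hv
  by_cases hvT : v ∈ ({p, q, r} : Finset _)
  · simp only [mem_insert, mem_singleton] at hvT
    rcases hvT with rfl | rfl | rfl <;> simp
  · exact (hX v hv hvT).le

lemma notMem_convexHull_erase_first
    (hX : ∀ v ∈ X, v ∉ ({p, q, r} : Finset _) → 0 < orient p q r v)
    (ha : 0 < orient p q r a) : p ∉ convexHull ℝ (X.erase p : Set (Fin 3 → ℝ)) := fun hp ↦ by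
  -- `p` would lie on the face of the hull in the plane `p q r`, which is at most the edge `q r`.
  have hface := mem_convexHull_zeros
    (fun v hv ↦ orient_nonneg_of_pos_of_notMem hX v (mem_of_mem_erase (mem_coe.1 hv))) (by simp) hp
  have hpair : {v ∈ (X.erase p : Set (Fin 3 → ℝ)) | orient p q r v = 0} ⊆ {q, r} := by
    rintro v ⟨hv, hv0⟩
    have := hX v (mem_of_mem_erase (mem_coe.1 hv))
    grind
  have hneg : orient a q r p < 0 := by
    linarith [orient_rotate a q r p, orient_swap_right q r a p, orient_rotate p q r a]
  exact notMem_convexHull_of_neg (by simp) hneg (convexHull_mono hpair hface)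

lemma notMem_convexHull_erase_of_orient_pos
    (hX : ∀ v ∈ X, v ∉ ({p, q, r} : Finset _) → 0 < orient p q r v)
    (ha : 0 < orient p q r a) :
    ∀ v ∈ ({p, q, r} : Finset _), v ∉ convexHull ℝ (X.erase v : Set (Fin 3 → ℝ)) := by
  simp only [mem_insert, mem_singleton, forall_eq_or_imp, forall_eq]
  refine ⟨notMem_convexHull_erase_first hX ha,
    notMem_convexHull_erase_first (q := r) (r := p) (a := a) ?_ ?_,
    notMem_convexHull_erase_first (q := p) (r := q) (a := a) ?_ ?_⟩ <;>
  grind [orient_rotate]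

lemma isHole_of_halfspace (hT : {p, q, r} ⊆ S) (hV : V ⊆ hullVertices S) (hne : V.Nonempty)
    (hpos : ∀ a ∈ V, 0 < orient p q r a)
    (hneg : ∀ i ∈ S \ hullVertices S, i ∉ ({p, q, r} : Finset _) → orient p q r i < 0) :
    IsHole 3 (#V + 3) S (V ∪ {p, q, r}) := by
  obtain ⟨a, ha⟩ := hne
  have hX : ∀ v ∈ V ∪ {p, q, r}, v ∉ ({p, q, r} : Finset _) → 0 < orient p q r v :=
    fun v hv hvT ↦ hpos v ((mem_union.1 hv).resolve_right hvT)
  have hdisj : Disjoint V {p, q, r} := by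
    refine disjoint_left.2 fun v hv hvT ↦ (hpos v hv).ne' ?_
    simp only [mem_insert, mem_singleton] at hvT
    rcases hvT with rfl | rfl | rfl <;> simp
  have hcard : #{p, q, r} = 3 := by
    simpa using List.toFinset_card_of_nodup
      ((nodup_of_orient_ne_zero (hpos a ha).ne').sublist (List.sublist_append_left [p, q, r] [a]))
  refine isHole_union hV hT hdisj hcard
    (notMem_convexHull_erase_of_orient_pos hX (hpos a ha)) fun i hi hiT ↦ ?_
  exact notMem_convexHull_of_neg (orient_nonneg_of_pos_of_notMem hX) (hneg i hi hiT)

lemma isHole_of_wedge (hT : {p, q, x, y} ⊆ S) (hV : V ⊆ hullVertices S)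
    (hxy : 0 < orient p q x y)
    (hpos : ∀ a ∈ V, 0 < orient p q x a ∧ 0 < orient p q a y)
    (hneg : ∀ i ∈ S \ hullVertices S, i ∉ ({p, q, x, y} : Finset _) →
      orient p q x i < 0 ∨ orient p q i y < 0) :
    IsHole 3 (#V + 4) S (V ∪ {p, q, x, y}) := by
  have hturn : ∀ v, orient q p y v = orient p q v y := fun v ↦ by
    linarith [orient_swap_left p q y v, orient_swap_right p q y v]
  have hX₁ : ∀ v ∈ V ∪ {p, q, x, y}, v ∉ ({p, q, x} : Finset _) → 0 < orient p q x v := by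
    grind
  have hX₂ : ∀ v ∈ V ∪ {p, q, x, y}, v ∉ ({q, p, y} : Finset _) → 0 < orient q p y v := by
    grind
  have hdisj : Disjoint V {p, q, x, y} := by
    refine disjoint_left.2 fun v hv hvT ↦ ?_
    have := hpos v hv
    simp only [mem_insert, mem_singleton] at hvT
    rcases hvT with rfl | rfl | rfl | rfl <;> simp at this
  have hcard : #{p, q, x, y} = 4 := by
    simpa using List.toFinset_card_of_nodup (nodup_of_orient_ne_zero hxy.ne')
  refine isHole_union hV hT hdisj hcard (fun i hi ↦ ?_) (fun i hi hiT ↦ ?_)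
  · rcases eq_or_ne i y with rfl | hiy
    · exact notMem_convexHull_erase_of_orient_pos hX₂ (hturn x ▸ hxy) i (by simp)
    · exact notMem_convexHull_erase_of_orient_pos hX₁ hxy i (by grind)
  · rcases hneg i hi hiT with h | h
    · exact notMem_convexHull_of_neg (orient_nonneg_of_pos_of_notMem hX₁) h
    · exact notMem_convexHull_of_neg (orient_nonneg_of_pos_of_notMem hX₂) (hturn i ▸ h)

lemma exists_isHole_of_halfspace {k : ℕ} (hT : {p, q, r} ⊆ S)
    (hneg : ∀ i ∈ S \ hullVertices S, i ∉ ({p, q, r} : Finset _) → orient p q r i < 0)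
    (hk : 0 < k) (hcard : k ≤ #{a ∈ hullVertices S | 0 < orient p q r a}) :
    ∃ X, IsHole 3 (k + 3) S X := by
  obtain ⟨V, hV, rfl⟩ := exists_subset_card_eq hcard
  exact ⟨_, isHole_of_halfspace hT (hV.trans (filter_subset _ _)) (card_pos.1 hk)
    (fun a ha ↦ (mem_filter.1 (hV ha)).2) hneg⟩

lemma exists_isHole_of_wedge {k : ℕ} (hT : {p, q, x, y} ⊆ S) (hxy : 0 < orient p q x y)
    (hneg : ∀ i ∈ S \ hullVertices S, i ∉ ({p, q, x, y} : Finset _) →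
      orient p q x i < 0 ∨ orient p q i y < 0)
    (hcard : k ≤ #{a ∈ hullVertices S | 0 < orient p q x a ∧ 0 < orient p q a y}) :
    ∃ X, IsHole 3 (k + 4) S X := by
  obtain ⟨V, hV, rfl⟩ := exists_subset_card_eq hcard
  exact ⟨_, isHole_of_wedge hT (hV.trans (filter_subset _ _)) hxy
    (fun a ha ↦ (mem_filter.1 (hV ha)).2) hneg⟩

end Holes

section InnerPoints

variable {S : Finset (Fin 3 → ℝ)} {c d e f p q x y z a : Fin 3 → ℝ}

lemma InGeneralPosition.exists_isHole_of_card_inner_le_three {k : ℕ} (hS : InGeneralPosition 3 S)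
    (hI : #(S \ hullVertices S) ≤ 3) (hk : 0 < k) (hcard : 2 * k + 2 ≤ #S) :
    ∃ X, IsHole 3 (k + 3) S X := by
  obtain ⟨T, hIT, hTS, hT⟩ := exists_subsuperset_card_eq sdiff_subset hI (by lia : 3 ≤ #S)
  by_contra hno
  have hside : ∀ p q r, T = {p, q, r} → #{a ∈ hullVertices S | 0 < orient p q r a} < k := by
    rintro p q r rfl
    by_contra! hcard
    exact hno (exists_isHole_of_halfspace hTS (fun i hi hiT ↦ (hiT (hIT hi)).elim) hk hcard)
  obtain ⟨p, q, r, hpq, hpr, hqr, rfl⟩ := card_eq_three.1 hT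
  have hcover : S ⊆ {p, q, r} ∪ ({a ∈ hullVertices S | 0 < orient p q r a} ∪
      {a ∈ hullVertices S | 0 < orient q p r a}) := by
    intro s hs
    by_cases hsT : s ∈ ({p, q, r} : Finset _)
    · exact mem_union_left _ hsT
    · have hsH : s ∈ hullVertices S := by
        by_contra hsH
        exact hsT (hIT (mem_sdiff.2 ⟨hs, hsH⟩))
      have hne : orient p q r s ≠ 0 := hS.orient_ne_zero (by grind) (by grind)
      grind [orient_swap_left]
  have := hside p q r rfl
  have := hside q p r (insert_comm _ _ _)
  have := (card_le_card hcover).trans ((card_union_le _ _).trans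
    (Nat.add_le_add_left (card_union_le _ _) _))
  lia

lemma card_beyond_face_le_two (hno : ¬∃ X, IsHole 3 6 S X)
    (hI : S \ hullVertices S = {c, d, e, f}) (h : 0 < orient c d e f) :
    #{a ∈ hullVertices S | orient c d e a < 0} ≤ 2 := by
  by_contra! hcard
  refine hno (exists_isHole_of_halfspace (p := d) (q := c) (r := e) (k := 3) ?_ ?_ three_pos ?_)
  · have hIS : {c, d, e, f} ⊆ S := hI ▸ sdiff_subset
    exact Subset.trans (by grind) hIS
  · grind [orient_swap_left]
  · simpa [orient_swap_left c d e] using Nat.succ_le_of_lt hcard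

lemma InGeneralPosition.card_hullVertices_le_card_beyond (hS : InGeneralPosition 3 S)
    (hno : ¬∃ X, IsHole 3 6 S X) (hI : S \ hullVertices S = {c, d, e, f})
    (h : 0 < orient c d e f) :
    #(hullVertices S) ≤
      #({a ∈ hullVertices S | orient c d e a < 0} ∪
        {a ∈ hullVertices S | orient c f d a < 0}) + 1 := by
  have hIS : {c, d, e, f} ⊆ S := hI ▸ sdiff_subset
  have hwedge : #{a ∈ hullVertices S | 0 < orient c d e a ∧ 0 < orient c d a f} ≤ 1 := by
    by_contra! hcard
    exact hno (exists_isHole_of_wedge (k := 2) hIS h (by grind) hcard)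
  have hcover : hullVertices S ⊆
      ({a ∈ hullVertices S | orient c d e a < 0} ∪ {a ∈ hullVertices S | orient c f d a < 0}) ∪
        {a ∈ hullVertices S | 0 < orient c d e a ∧ 0 < orient c d a f} := by
    intro a ha
    have hnodup := nodup_of_orient_ne_zero h.ne'
    have haI : a ∉ ({c, d, e, f} : Finset _) := hI ▸ fun h ↦ (mem_sdiff.1 h).2 ha
    have haS := hullVertices_subset S ha
    have he : orient c d e a ≠ 0 := hS.orient_ne_zero (by grind) (by grind)
    have hf : orient c d a f ≠ 0 := hS.orient_ne_zero (by grind) (by grind)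
    grind [orient_rotate_right]
  exact (card_le_card hcover).trans ((card_union_le _ _).trans (by lia))

lemma InGeneralPosition.exists_pos_orient_of_card_eq_four (hS : InGeneralPosition 3 S)
    (hcard : #S = 4) :
    ∃ c d e f, S = {c, d, e, f} ∧ 0 < orient c d e f := by
  obtain ⟨c, T, hcT, rfl, hT⟩ := card_eq_succ.1 hcard
  obtain ⟨d, e, f, hde, hdf, hef, rfl⟩ := card_eq_three.1 hT
  have hne : orient c d e f ≠ 0 := hS.orient_ne_zero Subset.rfl (by grind)
  rcases hne.lt_or_gt with h | h
  · exact ⟨d, c, e, f, insert_comm _ _ _, by linarith [orient_swap_left c d e f]⟩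
  · exact ⟨c, d, e, f, rfl, h⟩

lemma InGeneralPosition.exists_isHole_of_card_inner_eq_four (hS : InGeneralPosition 3 S)
    (hI : #(S \ hullVertices S) = 4) (hH : 5 ≤ #(hullVertices S)) : ∃ X, IsHole 3 6 S X := by
  by_contra hno
  obtain ⟨c, d, e, f, hI, hf⟩ := (hS.mono sdiff_subset).exists_pos_orient_of_card_eq_four hI
  have hd : 0 < orient c e f d := orient_rotate_right c d e f ▸ hf
  have he : 0 < orient c f d e := orient_rotate_right c e f d ▸ hd
  have hId : S \ hullVertices S = {c, e, f, d} := by grind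
  have hIe : S \ hullVertices S = {c, f, d, e} := by grind
  set F : Finset _ := {a ∈ hullVertices S | orient c d e a < 0}
  set D : Finset _ := {a ∈ hullVertices S | orient c e f a < 0}
  set G : Finset _ := {a ∈ hullVertices S | orient c f d a < 0}
  have hF : #F ≤ 2 := card_beyond_face_le_two hno hI hf
  have hD : #D ≤ 2 := card_beyond_face_le_two hno hId hd
  have hG : #G ≤ 2 := card_beyond_face_le_two hno hIe he
  have hFG := hS.card_hullVertices_le_card_beyond hno hI hf
  have hDF := hS.card_hullVertices_le_card_beyond hno hId hd
  have hGD := hS.card_hullVertices_le_card_beyond hno hIe he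
  have hDF_inter := card_union_add_card_inter D F
  have hGD_inter := card_union_add_card_inter G D
  have hdisj : Disjoint (F ∪ G) D := by
    rw [disjoint_union_left, disjoint_comm, disjoint_iff_inter_eq_empty,
      disjoint_iff_inter_eq_empty, ← card_eq_zero, ← card_eq_zero]
    lia
  have hsub : (F ∪ G) ∪ D ⊆ hullVertices S := by grind
  have := card_union_of_disjoint hdisj
  have := card_le_card hsub
  lia

lemma InGeneralPosition.exists_affine_relation_of_card_eq_five (hS : InGeneralPosition 3 S)
    (hcard : #S = 5) :
    ∃ p q x y z, S = {p, q, x, y, z} ∧ [p, q, x, y].Nodup ∧ ∃ α β γ : ℝ, 0 < α ∧ 0 < β ∧ 0 < γ ∧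
      ∀ g : (Fin 3 → ℝ) →ᵃ[ℝ] ℝ, g p = 0 → g q = 0 → α * g x + β * g y + γ * g z = 0 := by
  obtain ⟨w, hw, hw₀, h3⟩ : ∃ w : (Fin 3 → ℝ) → ℝ, ∑ s ∈ S, w s • s = 0 ∧ ∑ s ∈ S, w s = 0 ∧
      3 ≤ #{s ∈ S | 0 < w s} := by
    obtain ⟨w, hw, hw₀, hne⟩ := hS.exists_affine_dependence hcard
    have hsplit : S ⊆ {s ∈ S | 0 < w s} ∪ {s ∈ S | 0 < -w s} := by grind
    have := (card_le_card hsplit).trans (card_union_le _ _)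
    obtain h | h : 3 ≤ #{s ∈ S | 0 < w s} ∨ 3 ≤ #{s ∈ S | 0 < -w s} := by lia
    · exact ⟨w, hw, hw₀, h⟩
    · exact ⟨-w, by simp [hw], by simp [hw₀], h⟩
  obtain ⟨T, hTw, hT⟩ := exists_subset_card_eq h3
  obtain ⟨x, y, z, hxy, hxz, hyz, rfl⟩ := card_eq_three.1 hT
  have hTS := hTw.trans (filter_subset _ _)
  obtain ⟨p, q, hpq, hST⟩ : ∃ p q, p ≠ q ∧ S \ {x, y, z} = {p, q} :=
    card_eq_two.1 (by rw [card_sdiff_of_subset hTS]; lia)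
  have hS_eq : S = {p, q, x, y, z} := by
    rw [← sdiff_union_of_subset hTS, hST]
    grind
  have hpos : ∀ v ∈ ({x, y, z} : Finset _), 0 < w v := fun v hv ↦ (mem_filter.1 (hTw hv)).2
  have hnodup : [p, q, x, y, z].Nodup := by grind
  refine ⟨p, q, x, y, z, hS_eq, by grind, w x, w y, w z, hpos x (by simp), hpos y (by simp),
    hpos z (by simp), fun g hp hq ↦ ?_⟩
  have := sum_mul_affineMap_eq_zero hw hw₀ g
  rw [hS_eq, sum_insert, sum_insert, sum_insert, sum_insert, sum_singleton, hp, hq] at this <;>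
    grind

lemma InGeneralPosition.exists_axis_of_card_eq_five (hS : InGeneralPosition 3 S) (hcard : #S = 5) :
    ∃ p q x y z, S = {p, q, x, y, z} ∧
      0 < orient p q x y ∧ 0 < orient p q y z ∧ 0 < orient p q z x := by
  obtain ⟨p, q, x, y, z, hS_eq, hnodup, α, β, γ, hα, hβ, hγ, hrel⟩ :=
    hS.exists_affine_relation_of_card_eq_five hcard
  have hyz : γ * orient p q y z = α * orient p q x y := by
    have := hrel (orient p q y) (by simp) (by simp)
    rw [orient_apply_third, orient_swap_right p q x y] at this
    linarith
  have hzx : γ * orient p q z x = β * orient p q x y := by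
    have := hrel (orient p q x) (by simp) (by simp)
    rw [orient_apply_third, orient_swap_right p q z x] at this
    linarith
  rcases (hS.orient_ne_zero (by grind) hnodup).lt_or_gt with hxy | hxy
  · refine ⟨q, p, x, y, z, hS_eq.trans (insert_comm _ _ _), ?_⟩
    simp only [orient_swap_left p q, neg_pos]
    exact ⟨hxy, neg_of_mul_neg_right (hyz ▸ mul_neg_of_pos_of_neg hα hxy) hγ.le,
      neg_of_mul_neg_right (hzx ▸ mul_neg_of_pos_of_neg hβ hxy) hγ.le⟩
  · exact ⟨p, q, x, y, z, hS_eq, hxy, pos_of_mul_pos_right (hyz ▸ mul_pos hα hxy) hγ.le,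
      pos_of_mul_pos_right (hzx ▸ mul_pos hβ hxy) hγ.le⟩

lemma mem_wedge_of_ne_zero (hxy : 0 < orient p q x y) (hyz : 0 < orient p q y z)
    (hzx : 0 < orient p q z x) (hx : orient p q x a ≠ 0) (hy : orient p q y a ≠ 0)
    (hz : orient p q z a ≠ 0) :
    (0 < orient p q x a ∧ 0 < orient p q a y) ∨ (0 < orient p q y a ∧ 0 < orient p q a z) ∨
      (0 < orient p q z a ∧ 0 < orient p q a x) := by
  have hplucker := orient_plucker p q x y z a
  rw [orient_swap_right p q x a, orient_swap_right p q y a, orient_swap_right p q z a]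
  simp only [neg_pos]
  rcases hx.lt_or_gt with hx | hx <;> rcases hy.lt_or_gt with hy | hy <;>
    rcases hz.lt_or_gt with hz | hz <;> simp only [hx, hy, hz, true_and, and_true, true_or, or_true]
  · linarith [mul_neg_of_pos_of_neg hyz hx, mul_neg_of_pos_of_neg hzx hy,
      mul_neg_of_pos_of_neg hxy hz]
  · linarith [mul_pos hyz hx, mul_pos hzx hy, mul_pos hxy hz]

lemma card_wedge_le_one (hno : ¬∃ X, IsHole 3 6 S X)
    (hI : S \ hullVertices S = {p, q, x, y, z}) (hxy : 0 < orient p q x y)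
    (hzx : 0 < orient p q z x) :
    #{a ∈ hullVertices S | 0 < orient p q x a ∧ 0 < orient p q a y} ≤ 1 := by
  by_contra! hcard
  have hIS : {p, q, x, y, z} ⊆ S := hI ▸ sdiff_subset
  refine hno (exists_isHole_of_wedge (k := 2) (Subset.trans (by grind) hIS) hxy ?_ hcard)
  grind [orient_swap_right]

lemma InGeneralPosition.exists_isHole_of_card_inner_eq_five (hS : InGeneralPosition 3 S)
    (hI : #(S \ hullVertices S) = 5) (hH : 4 ≤ #(hullVertices S)) : ∃ X, IsHole 3 6 S X := by
  by_contra hno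
  obtain ⟨p, q, x, y, z, hI, hxy, hyz, hzx⟩ := (hS.mono sdiff_subset).exists_axis_of_card_eq_five hI
  have := card_wedge_le_one hno hI hxy hzx
  have := card_wedge_le_one (x := y) (y := z) (z := x) hno (by grind) hyz hxy
  have := card_wedge_le_one (x := z) (y := x) (z := y) hno (by grind) hzx hyz
  have hcover : hullVertices S ⊆
      {a ∈ hullVertices S | 0 < orient p q x a ∧ 0 < orient p q a y} ∪
        ({a ∈ hullVertices S | 0 < orient p q y a ∧ 0 < orient p q a z} ∪
          {a ∈ hullVertices S | 0 < orient p q z a ∧ 0 < orient p q a x}) := by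
    intro a ha
    have haI : a ∉ ({p, q, x, y, z} : Finset _) := hI ▸ fun h ↦ (mem_sdiff.1 h).2 ha
    have hIS : {p, q, x, y, z} ⊆ S := hI ▸ sdiff_subset
    have haS := hullVertices_subset S ha
    have hne : ∀ v ∈ ({x, y, z} : Finset _), orient p q v a ≠ 0 := fun v hv ↦
      hS.orient_ne_zero (by grind) (by grind)
    have := mem_wedge_of_ne_zero hxy hyz hzx (hne x (by simp)) (hne y (by simp)) (hne z (by simp))
    grind
  have := (card_le_card hcover).trans ((card_union_le _ _).trans
    (Nat.add_le_add_left (card_union_le _ _) _))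
  lia

end InnerPoints

/-- Every set of 9 points in ℝ³ in general position contains a 6-hole:
`h⁽³⁾(6) ≤ 9`. -/
theorem h3_6_le_9 (S : Finset (Fin 3 → ℝ)) (hcard : S.card = 9)
    (hgp : InGeneralPosition 3 S) :
    ∃ X : Finset (Fin 3 → ℝ), IsHole 3 6 S X := by
  have hH : 3 < #(hullVertices S) := hgp.lt_card_hullVertices (by lia)
  have hsum : #(S \ hullVertices S) + #(hullVertices S) = #S :=
    card_sdiff_add_card_eq_card (hullVertices_subset S)
  obtain hI | hI | hI : #(S \ hullVertices S) ≤ 3 ∨ #(S \ hullVertices S) = 4 ∨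
      #(S \ hullVertices S) = 5 := by lia
  · exact hgp.exists_isHole_of_card_inner_le_three hI three_pos (by lia)
  · exact hgp.exists_isHole_of_card_inner_eq_four hI (by lia)
  · exact hgp.exists_isHole_of_card_inner_eq_five hI (by lia)
end

section
/- (Exchange property for determinant signs) Let a₁,…,a_r, b₁,…,b_r ∈ ℝ^r. If det(b_i, a₂,…,a_r) · det(b₁,…,b_{i−1}, a₁, b_{i+1},…,b_r) ≥ 0 holds for all i = 1,…,r, then det(a₁,…,a_r) · det(b₁,…,b_r) ≥ 0. -/
/-- The determinant of the `r × r` matrix whose columns are the vectors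
`v 0, …, v (r-1)` in `ℝ^r`. -/
def colDet {r : ℕ} (v : Fin r → (Fin r → ℝ)) : ℝ :=
  Matrix.det (Matrix.of fun i j => v j i)

/-!
The Grassmann–Plücker exchange identity
`∑ i, det(b_i, a₂, …, a_r) * det(b₁, …, a₁, …, b_r) = det(a) * det(b)`, with `a₁` in the `i`-th
place, writes the product of the determinants as a sum of nonnegative terms. The identity is
Cramer's rule `∑ i, det(b₁, …, a₁, …, b_r) • b_i = det(b) • a₁`, to which one applies the linear
functional `x ↦ det(x, a₂, …, a_r)`.
-/

section ExchangeIdentity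

open Matrix

variable {n R : Type*} [Fintype n] [DecidableEq n] [CommRing R]

theorem sum_cramer_smul_col (B : Matrix n n R) (x : n → R) :
    ∑ i, B.cramer x i • B.col i = B.det • x := by
  simp only [← mulVec_cramer, mulVec_eq_sum, op_smul_eq_smul, ← row_transpose, row]

theorem sum_det_updateCol_mul_det_updateCol (A B : Matrix n n R) (k : n) :
    ∑ i, (A.updateCol k (B.col i)).det * (B.updateCol i (A.col k)).det = A.det * B.det :=
  calc
    _ = ∑ i, B.cramer (A.col k) i * A.cramer (B.col i) k := by
      simp only [cramer_apply, mul_comm]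
    _ = A.cramer (∑ i, B.cramer (A.col k) i • B.col i) k := by
      simp only [map_sum, map_smul, Finset.sum_apply, Pi.smul_apply, smul_eq_mul]
    _ = A.cramer (B.det • A.col k) k := by rw [sum_cramer_smul_col]
    _ = B.det * A.det := by
      rw [map_smul, Pi.smul_apply, smul_eq_mul, cramer_row_self A (A.col k) k fun _ => rfl,
        Pi.single_eq_same]
    _ = A.det * B.det := mul_comm _ _

theorem det_sign_exchange_general [PartialOrder R] [IsOrderedAddMonoid R]
    (A B : Matrix n n R) (k : n)
    (h : ∀ i, 0 ≤ (A.updateCol k (B.col i)).det * (B.updateCol i (A.col k)).det) :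
    0 ≤ A.det * B.det := by
  rw [← sum_det_updateCol_mul_det_updateCol A B k]
  exact Finset.sum_nonneg fun i _ => h i

end ExchangeIdentity

theorem colDet_update {r : ℕ} (v : Fin r → (Fin r → ℝ)) (k : Fin r) (x : Fin r → ℝ) :
    colDet (Function.update v k x) = ((Matrix.of fun i j => v j i).updateCol k x).det :=
  congrArg Matrix.det (Matrix.updateCol_transpose (M := Matrix.of v)).symm

/-- Exchange property for determinant signs: if
`det(b_i, a₂,…,a_r) ⬝ det(b₁,…,b_{i−1}, a₁, b_{i+1},…,b_r) ≥ 0` for all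
`i = 1,…,r`, then `det(a₁,…,a_r) ⬝ det(b₁,…,b_r) ≥ 0`. -/
theorem det_sign_exchange (r : ℕ) (hr : 0 < r) (a b : Fin r → (Fin r → ℝ))
    (h : ∀ i : Fin r,
      0 ≤ colDet (Function.update a ⟨0, hr⟩ (b i)) *
            colDet (Function.update b i (a ⟨0, hr⟩))) :
    0 ≤ colDet a * colDet b := by
  simp only [colDet_update] at h
  exact det_sign_exchange_general _ _ ⟨0, hr⟩ h
end
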